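/- Let q be a prime power, n, m ≥ 1 integers, δ ∈ [0,1], and let S ⊆ ℙF_q^{n-1} satisfy |S| ≥ δ·|ℙF_q^{n-1}|. Then for every integer d with 0 ≤ d < m·q, the F_q-rank of EVAL^m(S, W_{d,n}) is at least δ·C(d+n−1, n−1). -/

import Mathlib

/-- The `j`-th (multivariate) Hasse derivative of `Q`, i.e. the coefficient of `z^j`
in the expansion `Q(x+z) = ∑_j Q^{(j)}(x)·z^j`. -/
noncomputable def mvHasseDeriv {F : Type*} [CommSemiring F] {n : ℕ} (j : Fin n →₀ ℕ)
    (Q : MvPolynomial (Fin n) F) : MvPolynomial (Fin n) F :=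
  ∑ v ∈ Q.support, MvPolynomial.monomial (v - j)
    (Q.coeff v * ((∏ i, (v i).choose (j i) : ℕ) : F))

/-- The columns of the matrix `EVAL^m(S, W_{d,n})`. -/
noncomputable def evalCol (F : Type) [Field F] (n m d : ℕ) (S : Finset (Fin n → F))
    (v : {v : Fin n →₀ ℕ // (v.sum fun _ e => e) = d})
    (r : {r : (Fin n → F) × (Fin n →₀ ℕ) // r.1 ∈ S ∧ (r.2.sum fun _ e => e) < m}) : F :=
  MvPolynomial.eval r.1.1 (mvHasseDeriv r.1.2 (MvPolynomial.monomial v.1 (1 : F)))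

/-- The `F_q`-rank of `EVAL^m(S, W_{d,n})`: the dimension of the span of its columns. -/
noncomputable def evalRank (F : Type) [Field F] (n m d : ℕ) (S : Finset (Fin n → F)) : ℕ :=
  Module.finrank F (Submodule.span F (Set.range (evalCol F n m d S)))

open MvPolynomial

noncomputable def ptI {F : Type} [Field F] {n : ℕ} (x : Fin n → F) : Ideal (MvPolynomial (Fin n) F) :=
  RingHom.ker (eval x)

noncomputable def shiftT {F : Type} [Field F] {n : ℕ} (x : Fin n → F) :
    MvPolynomial (Fin n) F →ₐ[F] MvPolynomial (Fin n) F :=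
  aeval (fun i => X i + C (x i))

lemma shiftT_neg {F : Type} [Field F] {n : ℕ} (x : Fin n → F) (Q : MvPolynomial (Fin n) F) :
    shiftT (-x) (shiftT x Q) = Q := by
  have : (shiftT (-x)).comp (shiftT x) = AlgHom.id F _ := by
    apply MvPolynomial.algHom_ext
    intro i
    simp [shiftT, algHom_C]
  exact DFunLike.congr_fun this Q

lemma mem_ptI_pow {F : Type} [Field F] {n : ℕ} (x : Fin n → F) (m : ℕ) (Q : MvPolynomial (Fin n) F) :
    Q ∈ ptI x ^ m ↔ ∀ j : Fin n →₀ ℕ, j.degree < m → coeff j (shiftT x Q) = 0 := by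
  rw [← mem_pow_idealOfVars_iff']
  constructor
  · intro h
    have h1 : (ptI x).map (shiftT x) ≤ idealOfVars (Fin n) F := by
      rw [Ideal.map_le_iff_le_comap]
      intro p hp
      rw [Ideal.mem_comap, ← pow_one (idealOfVars _ _), mem_pow_idealOfVars_iff']
      intro j hj
      have : j = 0 := by
        rw [← Finsupp.degree_eq_zero_iff]; omega
      subst this
      have h2 : ∀ p, coeff 0 (shiftT x p) = eval x p := by
        intro p
        change ((constantCoeff).comp (shiftT x).toRingHom) p = _
        congr 1
        apply MvPolynomial.ringHom_ext <;> simp [shiftT]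
      rw [h2]; exact hp
    exact Ideal.pow_right_mono h1 m (by rw [← Ideal.map_pow]; exact Ideal.mem_map_of_mem _ h)
  · intro h
    have h1 : (idealOfVars (Fin n) F).map (shiftT (-x)) ≤ ptI x := by
      rw [Ideal.map_le_iff_le_comap, idealOfVars, Ideal.span_le]
      rintro _ ⟨i, rfl⟩
      simp [shiftT, ptI, RingHom.mem_ker]
    have := Ideal.pow_right_mono h1 m (by rw [← Ideal.map_pow]; exact Ideal.mem_map_of_mem _ h)
    rwa [shiftT_neg] at this

lemma map_ptI_pow {F : Type} [Field F] {n : ℕ} (x y : Fin n → F) (m : ℕ)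
    (f : MvPolynomial (Fin n) F →ₐ[F] MvPolynomial (Fin n) F)
    (hf : ∀ Q, eval y (f Q) = eval x Q)
    (Q : MvPolynomial (Fin n) F) (hQ : Q ∈ ptI x ^ m) : f Q ∈ ptI y ^ m := by
  have h1 : (ptI x).map f ≤ ptI y := by
    rw [Ideal.map_le_iff_le_comap]
    intro p hp
    simp only [ptI, RingHom.mem_ker, Ideal.mem_comap] at hp ⊢
    rw [hf, hp]
  exact Ideal.pow_right_mono h1 m (by rw [← Ideal.map_pow]; exact Ideal.mem_map_of_mem _ hQ)

noncomputable def bigPsi {F : Type} [Field F] {n : ℕ} (a : Fin n → F) :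
    MvPolynomial (Fin (n+1)) F →ₐ[F] MvPolynomial (Fin n) (Polynomial F) :=
  aeval (Fin.cons (C Polynomial.X) (fun i => X i + C (Polynomial.C (a i))))

lemma bigPsi_coeff {F : Type} [Field F] {n : ℕ} (a : Fin n → F) (Q : MvPolynomial (Fin (n+1)) F) :
    ∀ (j : Fin n →₀ ℕ) (i : ℕ),
    (coeff j (bigPsi a Q)).coeff i = coeff j (shiftT a ((finSuccEquiv F n Q).coeff i)) := by
  classical
  induction Q using MvPolynomial.induction_on with
  | C c =>
    intro j i
    have : finSuccEquiv F n (C c) = Polynomial.C (C c) := by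
      have := DFunLike.congr_fun (finSuccEquiv_comp_C_eq_C (R := F) n) c
      rw [← this]; simp
    have h2 : bigPsi a (C c) = C (Polynomial.C c) := by
      simp [bigPsi, algHom_C]
    rw [this, h2, Polynomial.coeff_C, coeff_C]
    by_cases hi : i = 0
    · subst hi; simp [algHom_C, coeff_C]; split_ifs <;> simp
    · simp [hi]; split_ifs <;> simp [Polynomial.coeff_C, hi]
  | add p q hp hq => intro j i; simp [hp, hq]
  | mul_X p k hp =>
    intro j i
    refine Fin.cases ?_ (fun k => ?_) k
    · have h2 : bigPsi a (X 0) = C Polynomial.X := by simp [bigPsi]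
      rw [map_mul, map_mul, h2, finSuccEquiv_X_zero, mul_comm, coeff_C_mul, mul_comm]
      cases i with
      | zero => simp
      | succ i => rw [Polynomial.coeff_mul_X, Polynomial.coeff_mul_X, hp]
    · have h2 : bigPsi a (X k.succ) = X k + C (Polynomial.C (a k)) := by simp [bigPsi]
      rw [map_mul, map_mul, h2, finSuccEquiv_X_succ, Polynomial.coeff_mul_C, map_mul]
      have h3 : shiftT a (X k) = X k + C (a k) := by simp [shiftT]
      rw [h3, mul_add, mul_add, coeff_add, coeff_add, Polynomial.coeff_add, coeff_mul_X', coeff_mul_X',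
        mul_comm _ (C (Polynomial.C _)), coeff_C_mul, mul_comm _ (C (a k)), coeff_C_mul, mul_comm (Polynomial.C _), mul_comm (a k), Polynomial.coeff_mul_C, hp]
      split_ifs <;> simp [hp]

noncomputable def Lk {F : Type} [Field F] (n : ℕ) (π : Polynomial F) (k : ℕ) :
    Ideal (MvPolynomial (Fin n) (Polynomial F)) where
  carrier := {P | ∀ j : Fin n →₀ ℕ, π ^ (k - j.degree) ∣ coeff j P}
  add_mem' := fun ha hb j => by rw [coeff_add]; exact dvd_add (ha j) (hb j)
  zero_mem' := fun j => by simp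
  smul_mem' := fun c P hP j => by
    classical
    rw [smul_eq_mul, coeff_mul]
    refine Finset.dvd_sum fun x hx => ?_
    refine Dvd.dvd.mul_left (dvd_trans (pow_dvd_pow _ ?_) (hP x.2)) _
    have : x.1 + x.2 = j := by simpa using hx
    rw [← this, map_add]; omega

lemma Lk_mul {F : Type} [Field F] (n : ℕ) (π : Polynomial F) (k l : ℕ) :
    Lk n π k * Lk n π l ≤ Lk n π (k + l) := by
  classical
  rw [Ideal.mul_le]
  intro P hP R hR j
  rw [coeff_mul]
  refine Finset.dvd_sum fun x hx => ?_
  refine dvd_trans (pow_dvd_pow _ ?_) (show π ^ ((k - x.1.degree) + (l - x.2.degree)) ∣ _ from ?_)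
  · have : x.1 + x.2 = j := by simpa using hx
    rw [← this, map_add]; omega
  · rw [pow_add]; exact mul_dvd_mul (hP _) (hR _)

lemma Lk_pow {F : Type} [Field F] (n : ℕ) (π : Polynomial F) (k : ℕ) :
    Lk n π 1 ^ k ≤ Lk n π k := by
  induction k with
  | zero => intro P _ j; simp
  | succ k ih => rw [pow_succ]; exact (Ideal.mul_mono_left ih).trans (Lk_mul n π k 1)

lemma bigPsi_mem {F : Type} [Field F] {n : ℕ} (a : Fin n → F) (b : F) (m : ℕ)
    (Q : MvPolynomial (Fin (n+1)) F) (hQ : Q ∈ ptI (Fin.cons b a : Fin (n+1) → F) ^ m) :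
    bigPsi a Q ∈ Lk n (Polynomial.X - Polynomial.C b) m := by
  have h1 : (ptI (Fin.cons b a : Fin (n+1) → F)).map (bigPsi a) ≤
      Lk n (Polynomial.X - Polynomial.C b) 1 := by
    rw [Ideal.map_le_iff_le_comap]
    intro p hp j
    by_cases hj : j = 0
    · subst hj
      have h2 : ∀ p, (coeff 0 (bigPsi a p)).eval b = eval (Fin.cons b a : Fin (n+1) → F) p := by
        intro p
        change (((Polynomial.evalRingHom b).comp constantCoeff).comp (bigPsi a).toRingHom) p = _
        congr 1
        apply MvPolynomial.ringHom_ext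
        · intro r; simp [bigPsi, algHom_C]
        · intro i; refine Fin.cases ?_ (fun i => ?_) i <;> simp [bigPsi]
      simp only [map_zero, tsub_zero, pow_one]
      rw [Polynomial.dvd_iff_isRoot, Polynomial.IsRoot, h2]
      exact hp
    · have : j.degree ≠ 0 := by rwa [Ne, Finsupp.degree_eq_zero_iff]
      have : 1 - j.degree = 0 := by omega
      simp [this]
  refine Lk_pow _ _ _ (Ideal.pow_right_mono h1 m ?_)
  rw [← Ideal.map_pow]; exact Ideal.mem_map_of_mem _ hQ

lemma schwartz {F : Type} [Field F] [Fintype F] (n : ℕ) : ∀ (m : ℕ) (Q : MvPolynomial (Fin n) F),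
    Q ≠ 0 → (∀ x, Q ∈ ptI x ^ m) → m * Fintype.card F ≤ Q.totalDegree := by
  classical
  induction n with
  | zero =>
    intro m Q hQ h
    rcases Nat.eq_zero_or_pos m with rfl | hm
    · simp
    exfalso
    have h1 := Ideal.pow_le_self (by omega) (h 0)
    apply hQ
    rw [eq_C_of_isEmpty Q] at h1 ⊢
    simp [ptI, RingHom.mem_ker] at h1
    rw [h1, map_zero]
  | succ n ih =>
    intro m Q hQ h
    set q := Fintype.card F
    have hq : 0 < q := Fintype.card_pos
    set P := finSuccEquiv F n Q with hP
    have hP0 : P ≠ 0 := by simpa [hP] using hQ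
    set t := P.natDegree with ht
    have hl : P.coeff t ≠ 0 := by
      rw [ht]; simpa using hP0
    have key : ∀ a, P.coeff t ∈ ptI a ^ (m - t / q) := by
      intro a
      rw [mem_ptI_pow]
      intro j hj
      rw [hP, ← bigPsi_coeff]
      have h0 : coeff j (bigPsi a Q) = 0 := by
        by_contra hne
        have hdiv : (∏ b : F, (Polynomial.X - Polynomial.C b) ^ (m - j.degree)) ∣ coeff j (bigPsi a Q) := by
          apply Finset.prod_dvd_of_coprime
          · intro b _ c _ hbc
            exact (Polynomial.isCoprime_X_sub_C_of_isUnit_sub (sub_ne_zero.2 hbc).isUnit).pow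
          · intro b _
            exact bigPsi_mem a b m Q (h _) j
        have hd := Polynomial.natDegree_le_of_dvd hdiv hne
        rw [Polynomial.natDegree_prod _ _ (fun b _ => pow_ne_zero _ (Polynomial.X_sub_C_ne_zero b))] at hd
        simp only [Polynomial.natDegree_pow, Polynomial.natDegree_X_sub_C, mul_one, Finset.sum_const, Finset.card_univ, smul_eq_mul] at hd
        have hd2 : (coeff j (bigPsi a Q)).natDegree ≤ t := by
          rw [Polynomial.natDegree_le_iff_coeff_eq_zero]
          intro N hN
          rw [bigPsi_coeff, ← hP, Polynomial.coeff_eq_zero_of_natDegree_lt hN, map_zero, coeff_zero]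
        have h3 : q * (t / q + 1) ≤ q * (m - j.degree) := Nat.mul_le_mul_left _ (by omega)
        have h4 := Nat.lt_mul_div_succ t hq
        change q * _ ≤ _ at hd
        omega
      rw [h0, Polynomial.coeff_zero]
    have h1 := ih _ _ hl key
    have h2 := totalDegree_coeff_finSuccEquiv_add_le Q t hl
    have h3 : m * q ≤ (m - t/q) * q + (t/q) * q := by
      rw [← add_mul]; exact Nat.mul_le_mul_right _ (by omega)
    have h4 := Nat.div_mul_le_self t q
    change _ + t ≤ _ at h2
    change _ * q ≤ _ at h1
    change (P.coeff t).totalDegree + t ≤ _ at h2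
    omega

lemma coeff_shiftT {F : Type} [Field F] {n : ℕ} (x : Fin n → F) (v j : Fin n →₀ ℕ) :
    eval x (mvHasseDeriv j (monomial v (1:F))) = coeff j (shiftT x (monomial v 1)) := by
  classical
  have h1 : eval x (mvHasseDeriv j (monomial v (1:F))) =
      ∏ i, (((v i).choose (j i) : F) * x i ^ (v i - j i)) := by
    rw [mvHasseDeriv, support_monomial, if_neg one_ne_zero, Finset.sum_singleton, eval_monomial,
      Finset.prod_mul_distrib, coeff_monomial, if_pos rfl, one_mul, Finsupp.prod_fintype _ _ (by simp)]
    simp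
  rw [h1]
  have h2 : ∀ i, ((X i + C (x i)) ^ (v i) : MvPolynomial (Fin n) F) =
      ∑ k ∈ Finset.range (v i + 1), monomial (Finsupp.single i k) (((v i).choose k : F) * x i ^ (v i - k)) := by
    intro i
    rw [add_pow]
    refine Finset.sum_congr rfl fun k _ => ?_
    rw [X_pow_eq_monomial, ← map_pow, ← map_natCast (C : F →+* MvPolynomial (Fin n) F), mul_assoc, ← map_mul, mul_comm, C_mul_monomial, mul_one, mul_comm]
  have h3 : shiftT x (monomial v 1) = ∏ i, ((X i + C (x i)) ^ (v i) : MvPolynomial (Fin n) F) := by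
    rw [shiftT, aeval_monomial, Finsupp.prod_fintype _ _ (by simp)]; simp
  rw [h3]
  simp_rw [h2]
  rw [Finset.prod_univ_sum, coeff_sum]
  have h4 : ∀ p : Fin n → ℕ, coeff j (∏ i, monomial (Finsupp.single i (p i)) (((v i).choose (p i) : F) * x i ^ (v i - p i)))
      = if p = j then ∏ i, (((v i).choose (j i) : F) * x i ^ (v i - j i)) else 0 := by
    intro p
    have : ∀ i, (monomial (Finsupp.single i (p i)) (((v i).choose (p i) : F) * x i ^ (v i - p i)) : MvPolynomial (Fin n) F)
      = C (((v i).choose (p i) : F) * x i ^ (v i - p i)) * X i ^ (p i) := by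
        intro i; rw [X_pow_eq_monomial, C_mul_monomial, mul_one]
    simp_rw [this]
    rw [Finset.prod_mul_distrib, ← map_prod, coeff_C_mul]
    have h5 : (∏ i, X i ^ (p i) : MvPolynomial (Fin n) F) = monomial (Finsupp.equivFunOnFinite.symm p) 1 := by
      rw [monomial_eq, Finsupp.prod_fintype _ _ (by simp)]; simp
    rw [h5, coeff_monomial]
    by_cases hp : p = j
    · subst hp; simp
    · rw [if_neg hp, if_neg, mul_zero]
      rintro rfl; simp at hp
  simp_rw [h4]
  rw [Finset.sum_ite_eq']
  split_ifs with h
  · rfl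
  · rw [Fintype.mem_piFinset] at h
    push Not at h
    obtain ⟨i, hi⟩ := h
    apply Finset.prod_eq_zero (Finset.mem_univ i)
    rw [Nat.choose_eq_zero_of_lt (by simpa using hi)]; simp

lemma weights {F V X : Type} [Field F] [AddCommGroup V] [Module F V] [FiniteDimensional F V]
    [DecidableEq X] (K : X → Submodule F V) (T : Finset X) :
    ∃ w : X → ℕ, ∑ x ∈ T, w x + Module.finrank F (T.inf K : Submodule F V) = Module.finrank F V ∧
      ∀ A ⊆ T, ∑ x ∈ A, w x + Module.finrank F (A.inf K : Submodule F V) ≤ Module.finrank F V := by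
  induction T using Finset.induction_on with
  | empty =>
    refine ⟨0, by rw [Finset.inf_empty, finrank_top]; simp, fun A hA => ?_⟩
    rw [Finset.subset_empty.1 hA, Finset.inf_empty, finrank_top]; simp
  | insert x T hx ih =>
    obtain ⟨w, h1, h2⟩ := ih
    have hle : Module.finrank F (K x ⊓ T.inf K : Submodule F V) ≤ Module.finrank F (T.inf K : Submodule F V) :=
      Submodule.finrank_mono inf_le_right
    have hs : ∀ A, x ∉ A → ∑ y ∈ A, Function.update w x (Module.finrank F (T.inf K : Submodule F V) -
      Module.finrank F (K x ⊓ T.inf K : Submodule F V)) y = ∑ y ∈ A, w y := by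
      intro A hA
      refine Finset.sum_congr rfl fun y hy => ?_
      rw [Function.update_of_ne]; rintro rfl; exact hA hy
    refine ⟨Function.update w x (Module.finrank F (T.inf K : Submodule F V) -
      Module.finrank F (K x ⊓ T.inf K : Submodule F V)), ?_, fun A hA => ?_⟩
    · rw [Finset.sum_insert hx, hs T hx, Finset.inf_insert, Function.update_self]; omega
    · by_cases hxA : x ∈ A
      · have hB : A.erase x ⊆ T := by
          intro y hy
          have := hA (Finset.mem_of_mem_erase hy)
          exact Finset.mem_of_mem_insert_of_ne this (Finset.ne_of_mem_erase hy)
        rw [← Finset.insert_erase hxA]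
        set B := A.erase x
        have hxB : x ∉ B := Finset.notMem_erase x A
        rw [Finset.sum_insert hxB, hs B hxB, Finset.inf_insert, Function.update_self]
        have h3 := h2 B hB
        have hTB : T.inf K ≤ B.inf K := Finset.inf_mono hB
        have h4 := Submodule.finrank_sup_add_finrank_inf_eq (T.inf K) (K x ⊓ B.inf K)
        have h5 : T.inf K ⊓ (K x ⊓ B.inf K) = K x ⊓ T.inf K := by
          rw [inf_left_comm, inf_eq_left.2 hTB]
        have h6 : Module.finrank F (T.inf K ⊔ (K x ⊓ B.inf K) : Submodule F V) ≤ Module.finrank F (B.inf K : Submodule F V) :=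
          Submodule.finrank_mono (sup_le hTB inf_le_right)
        rw [h5] at h4
        omega
      · rw [hs A hxA]
        refine h2 A fun y hy => Finset.mem_of_mem_insert_of_ne (hA hy) ?_
        rintro rfl; exact hxA hy

lemma exists_equiv {F : Type} [Field F] {n : ℕ} (u v : Fin n → F) (hu : u ≠ 0) (hv : v ≠ 0) :
    ∃ g : (Fin n → F) ≃ₗ[F] (Fin n → F), g u = v := by
  let f := (LinearEquiv.toSpanNonzeroSingleton F _ u hu).symm ≪≫ₗ
    LinearEquiv.toSpanNonzeroSingleton F _ v hv
  obtain ⟨g, hg⟩ := Submodule.exists_linearEquiv_restrict_eq f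
  refine ⟨g, ?_⟩
  have := hg ⟨u, Submodule.mem_span_singleton_self u⟩
  have h2 : (LinearEquiv.toSpanNonzeroSingleton F _ u hu).symm ⟨u, Submodule.mem_span_singleton_self u⟩ = (1 : F) :=
    LinearEquiv.coord_self F _ u hu
  rw [← this]
  simp [f, h2]

lemma averaging {F V : Type} [Field F] [Fintype F] [DecidableEq F] [AddCommGroup V] [Module F V] [FiniteDimensional F V]
    {n : ℕ} (K : (Fin n → F) → Submodule F V) (hn : 1 ≤ n)
    (S X : Finset (Fin n → F)) (hX : ∀ x, x ∈ X ↔ x ≠ 0) (hSX : S ⊆ X) (hK : X.inf K = ⊥)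
    (hg : ∀ (g : (Fin n → F) ≃ₗ[F] (Fin n → F)) (A : Finset (Fin n → F)),
      Module.finrank F (A.inf K : Submodule F V) ≤ Module.finrank F ((A.image g).inf K : Submodule F V)) :
    S.card * Module.finrank F V + X.card * Module.finrank F (S.inf K : Submodule F V) ≤ X.card * Module.finrank F V := by
  classical
  obtain ⟨w, h1, h2⟩ := weights K X
  rw [hK, finrank_bot, add_zero] at h1
  haveI : Finite ((Fin n → F) ≃ₗ[F] (Fin n → F)) :=
    Finite.of_injective (fun g => (g : (Fin n → F) → (Fin n → F))) DFunLike.coe_injective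
  letI : Fintype ((Fin n → F) ≃ₗ[F] (Fin n → F)) := Fintype.ofFinite _
  set G := (Fin n → F) ≃ₗ[F] (Fin n → F)
  let W : (Fin n → F) → ℕ := fun s => ∑ g : G, w (g s)
  have hx0 : (fun _ => 1 : Fin n → F) ≠ 0 := fun h => one_ne_zero (congrFun h ⟨0, hn⟩)
  set x0 : Fin n → F := fun _ => 1
  have hW : ∀ s ∈ X, W s = W x0 := by
    intro s hs
    obtain ⟨h, rfl⟩ := exists_equiv x0 s hx0 ((hX s).1 hs)
    exact Fintype.sum_equiv (Equiv.mulRight (h : G)) _ _ (fun g => rfl)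
  have hgX : ∀ g : G, ∑ s ∈ X, w (g s) = Module.finrank F V := by
    intro g
    rw [← h1]
    refine Finset.sum_bij (fun s _ => g s) ?_ ?_ ?_ ?_
    · intro s hs; rw [hX] at hs ⊢; exact fun h => hs (g.injective (h.trans g.map_zero.symm))
    · intro a _ b _ h; exact g.injective h
    · intro b hb; refine ⟨g.symm b, ?_, g.apply_symm_apply b⟩
      rw [hX] at hb ⊢; exact fun h => hb (g.symm.injective (h.trans g.symm.map_zero.symm))
    · intros; rfl
  have e1 : X.card * W x0 = Fintype.card G * Module.finrank F V := by
    have : ∑ s ∈ X, W s = X.card * W x0 := by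
      rw [Finset.sum_congr rfl hW, Finset.sum_const, smul_eq_mul]
    rw [← this, Finset.sum_comm, Finset.sum_congr rfl (fun g _ => hgX g), Finset.sum_const, smul_eq_mul, Finset.card_univ]
  have e2 : S.card * W x0 + Fintype.card G * Module.finrank F (S.inf K : Submodule F V) ≤ Fintype.card G * Module.finrank F V := by
    have : ∑ s ∈ S, W s = S.card * W x0 := by
      rw [Finset.sum_congr rfl (fun s hs => hW s (hSX hs)), Finset.sum_const, smul_eq_mul]
    have h3 : ∑ g : G, (∑ s ∈ S, w (g s) + Module.finrank F (S.inf K : Submodule F V)) ≤ ∑ g : G, Module.finrank F V := by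
      refine Finset.sum_le_sum fun g _ => ?_
      have h4 := h2 (S.image g) (by
        intro y hy
        obtain ⟨s, hs, rfl⟩ := Finset.mem_image.1 hy
        have := hSX hs
        rw [hX] at this ⊢; exact fun h => this (g.injective (h.trans g.map_zero.symm)))
      rw [Finset.sum_image (fun a _ b _ h => g.injective h)] at h4
      have := hg g S
      omega
    rw [Finset.sum_add_distrib, Finset.sum_comm] at h3
    simp only [Finset.sum_const, smul_eq_mul, Finset.card_univ] at h3
    rw [← this]; exact h3
  have hG : 0 < Fintype.card G := Fintype.card_pos_iff.2 ⟨LinearEquiv.refl _ _⟩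
  refine Nat.le_of_mul_le_mul_left ?_ hG
  calc _ = S.card * (Fintype.card G * Module.finrank F V) + X.card * (Fintype.card G * Module.finrank F (S.inf K : Submodule F V)) := by ring
    _ = X.card * (S.card * W x0 + Fintype.card G * Module.finrank F (S.inf K : Submodule F V)) := by rw [← e1]; ring
    _ ≤ X.card * (Fintype.card G * Module.finrank F V) := Nat.mul_le_mul_left _ e2
    _ = _ := by ring

noncomputable def linSub {F : Type} [Field F] {n : ℕ} (g : (Fin n → F) →ₗ[F] (Fin n → F)) :
    MvPolynomial (Fin n) F →ₐ[F] MvPolynomial (Fin n) F :=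
  aeval (fun i => ∑ k, C (g (Pi.single k 1) i) * X k)

lemma eval_linSub {F : Type} [Field F] {n : ℕ} (g : (Fin n → F) →ₗ[F] (Fin n → F)) (x : Fin n → F)
    (Q : MvPolynomial (Fin n) F) : eval x (linSub g Q) = eval (g x) Q := by
  change ((eval x).comp (linSub g).toRingHom) Q = _
  congr 1
  apply MvPolynomial.ringHom_ext
  · intro r; simp [linSub]
  · intro i
    simp only [linSub, AlgHom.toRingHom_eq_coe, RingHom.comp_apply, RingHom.coe_coe, aeval_X, map_sum, map_mul, eval_C, eval_X]
    conv_rhs => rw [LinearMap.pi_apply_eq_sum_univ g x]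
    rw [Finset.sum_apply]
    refine Finset.sum_congr rfl fun k _ => ?_
    have : (fun j => if k = j then (1 : F) else 0) = Pi.single k 1 := by
      funext j; simp [Pi.single_apply, eq_comm]
    rw [this, Pi.smul_apply, smul_eq_mul, mul_comm]

lemma linSub_comp {F : Type} [Field F] {n : ℕ} (g : (Fin n → F) ≃ₗ[F] (Fin n → F))
    (Q : MvPolynomial (Fin n) F) : linSub (g : (Fin n → F) →ₗ[F] (Fin n → F)) (linSub (g.symm : (Fin n → F) →ₗ[F] (Fin n → F)) Q) = Q := by
  have : (linSub (g : (Fin n → F) →ₗ[F] (Fin n → F))).comp (linSub (g.symm : (Fin n → F) →ₗ[F] (Fin n → F))) = AlgHom.id F _ := by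
    apply MvPolynomial.algHom_ext
    intro i
    have hh : ∀ k, ∑ l, g.symm (Pi.single l 1) i * g (Pi.single k 1) l = if k = i then 1 else 0 := by
      intro k
      have h1 := eval_linSub (g.symm : (Fin n → F) →ₗ[F] (Fin n → F)) (g (Pi.single k 1)) (X i)
      simpa [linSub, Pi.single_apply, eq_comm] using h1
    simp only [linSub, AlgHom.comp_apply, aeval_X, map_sum, map_mul, algHom_C, AlgHom.id_apply, algebraMap_eq]
    simp_rw [Finset.mul_sum]
    rw [Finset.sum_comm]
    simp_rw [← mul_assoc, ← map_mul, ← Finset.sum_mul, ← map_sum]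
    simp only [LinearEquiv.coe_coe, hh]
    simp
  exact DFunLike.congr_fun this Q

lemma scale_hom {F : Type} [Field F] {n d : ℕ} (c : F) (Q : MvPolynomial (Fin n) F) (hQ : Q.IsHomogeneous d) :
    (aeval (fun i => C c * X i) Q : MvPolynomial (Fin n) F) = c ^ d • Q := by
  conv_lhs => rw [Q.as_sum]
  conv_rhs => rw [Q.as_sum]
  rw [map_sum, Finset.smul_sum]
  refine Finset.sum_congr rfl fun v hv => ?_
  have hd := hQ.degree_eq_sum_deg_support hv
  rw [aeval_monomial, Finsupp.prod_fintype _ _ (by simp)]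
  simp_rw [mul_pow]
  rw [Finset.prod_mul_distrib, Finset.prod_pow_eq_pow_sum, monomial_eq, Finsupp.prod_fintype _ _ (by simp),
    smul_eq_C_mul, map_pow, hd, algebraMap_eq, ← Finsupp.degree_apply, Finsupp.degree_eq_sum]
  ring

noncomputable def Kx (F : Type) [Field F] (n m d : ℕ) (x : Fin n → F) :
    Submodule F (homogeneousSubmodule (Fin n) F d) :=
  ((ptI x ^ m).restrictScalars F).comap (homogeneousSubmodule (Fin n) F d).subtype

lemma mem_Kx {F : Type} [Field F] {n m d : ℕ} {x : Fin n → F} {Q : homogeneousSubmodule (Fin n) F d} :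
    Q ∈ Kx F n m d x ↔ Q.1 ∈ ptI x ^ m := Iff.rfl

lemma mem_inf_Kx {F : Type} [Field F] {n m d : ℕ} {A : Finset (Fin n → F)} {Q : homogeneousSubmodule (Fin n) F d} :
    Q ∈ A.inf (Kx F n m d) ↔ ∀ x ∈ A, Q.1 ∈ ptI x ^ m := by
  simp [Submodule.mem_finsetInf, mem_Kx]

lemma Kx_equiv {F : Type} [Field F] [DecidableEq F] [Fintype F] {n m d : ℕ} (g : (Fin n → F) ≃ₗ[F] (Fin n → F)) (A : Finset (Fin n → F))
    [FiniteDimensional F (homogeneousSubmodule (Fin n) F d)] :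
    Module.finrank F (A.inf (Kx F n m d) : Submodule F _) ≤
      Module.finrank F ((A.image g).inf (Kx F n m d) : Submodule F _) := by
  let h : (Fin n → F) →ₗ[F] (Fin n → F) := g.symm
  let f : homogeneousSubmodule (Fin n) F d →ₗ[F] homogeneousSubmodule (Fin n) F d :=
    ((linSub h).toLinearMap.comp (homogeneousSubmodule (Fin n) F d).subtype).codRestrict _ (by
      intro Q
      have := (show Q.1.IsHomogeneous d from Q.2).aeval (n := 1) (fun i => ∑ k, C (h (Pi.single k 1) i) * X k) (by
        intro i
        refine IsHomogeneous.sum _ _ _ fun k _ => ?_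
        simpa using (isHomogeneous_C (Fin n) (h (Pi.single k 1) i)).mul (isHomogeneous_X F k))
      rw [one_mul] at this
      exact this)
  have hf : Function.Injective f := by
    intro P Q hPQ
    have h1 : linSub h P.1 = linSub h Q.1 := congrArg Subtype.val hPQ
    have h2 := congrArg (linSub (g : (Fin n → F) →ₗ[F] (Fin n → F))) h1
    rw [linSub_comp, linSub_comp] at h2
    exact Subtype.ext h2
  rw [(Submodule.equivMapOfInjective f hf (A.inf (Kx F n m d))).finrank_eq]
  apply Submodule.finrank_mono
  rintro _ ⟨Q, hQ, rfl⟩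
  rw [mem_inf_Kx]
  intro y hy
  obtain ⟨x, hx, rfl⟩ := Finset.mem_image.1 hy
  refine map_ptI_pow x (g x) m (linSub h) (fun P => ?_) Q.1 (mem_inf_Kx.1 hQ x hx)
  rw [eval_linSub]; simp [h]

lemma evalRank_ge {F : Type} [Field F] {n m d : ℕ} (S : Finset (Fin n → F))
    [FiniteDimensional F (homogeneousSubmodule (Fin n) F d)] :
    Module.finrank F (homogeneousSubmodule (Fin n) F d) ≤ evalRank F n m d S +
      Module.finrank F (S.inf (Kx F n m d) : Submodule F _) := by
  classical
  let R := {r : (Fin n → F) × (Fin n →₀ ℕ) // r.1 ∈ S ∧ (r.2.sum fun _ e => e) < m}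
  let L : MvPolynomial (Fin n) F →ₗ[F] (R → F) :=
    LinearMap.pi fun r => (lcoeff F r.1.2).comp (shiftT r.1.1).toLinearMap
  let L' := L.comp (homogeneousSubmodule (Fin n) F d).subtype
  have hker : LinearMap.ker L' ≤ S.inf (Kx F n m d) := by
    intro Q hQ
    rw [mem_inf_Kx]
    intro x hx
    rw [mem_ptI_pow]
    intro j hj
    exact congrFun (LinearMap.mem_ker.1 hQ) ⟨(x, j), hx, hj⟩
  haveI hfin : Finite {v : Fin n →₀ ℕ // (v.sum fun _ e => e) = d} := by
    refine Set.Finite.to_subtype (s := {v : Fin n →₀ ℕ | (v.sum fun _ e => e) = d}) ?_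
    refine (Finset.finite_toSet (Finset.univ.finsuppAntidiag d)).subset ?_
    intro v hv
    change (v.sum fun _ e => e) = d at hv
    simp [Finset.mem_finsuppAntidiag, ← hv, Finsupp.sum_fintype]
  have hran : LinearMap.range L' ≤ Submodule.span F (Set.range (evalCol F n m d S)) := by
    rintro _ ⟨Q, rfl⟩
    change L Q.1 ∈ _
    rw [Q.1.as_sum, map_sum]
    refine Submodule.sum_mem _ fun v hv => ?_
    have hvd : (v.sum fun _ e => e) = d := by
      have := (show Q.1.IsHomogeneous d from Q.2).degree_eq_sum_deg_support hv
      rw [this]; rfl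
    have : L (monomial v (coeff v Q.1)) = coeff v Q.1 • evalCol F n m d S ⟨v, hvd⟩ := by
      rw [← mul_one (coeff v Q.1), ← smul_eq_mul, ← smul_monomial, map_smul, smul_eq_mul, mul_one]
      congr 1
      funext r
      exact (coeff_shiftT r.1.1 v r.1.2).symm
    rw [this]
    exact Submodule.smul_mem _ _ (Submodule.subset_span ⟨_, rfl⟩)
  haveI : FiniteDimensional F (Submodule.span F (Set.range (evalCol F n m d S))) :=
    FiniteDimensional.span_of_finite F (Set.finite_range _)
  rw [← LinearMap.finrank_range_add_finrank_ker L']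
  exact add_le_add (Submodule.finrank_mono hran) (Submodule.finrank_mono hker)

lemma finrank_ge {F : Type} [Field F] {n d : ℕ} (hn : 1 ≤ n)
    [FiniteDimensional F (homogeneousSubmodule (Fin n) F d)] :
    (d + n - 1).choose (n - 1) ≤ Module.finrank F (homogeneousSubmodule (Fin n) F d) := by
  classical
  let T := (Finset.univ : Finset (Fin n)).finsuppAntidiag d
  let b : T → homogeneousSubmodule (Fin n) F d := fun v => ⟨monomial v.1 1, isHomogeneous_monomial 1 (by
    have := v.2
    simp only [T, Finset.mem_finsuppAntidiag] at this
    rw [Finsupp.degree_eq_sum]; exact this.1)⟩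
  have hb : LinearIndependent F b := by
    apply LinearIndependent.of_comp (homogeneousSubmodule (Fin n) F d).subtype
    have := (basisMonomials (Fin n) F).linearIndependent.comp (Subtype.val : T → _) Subtype.val_injective
    convert this using 1
    funext v
    simp [b]
  have h1 := hb.fintype_card_le_finrank
  rw [Fintype.card_coe, Finset.card_finsuppAntidiag_nat_eq_choose] at h1
  simp only [Finset.card_univ, Fintype.card_fin] at h1
  have h2 : (d + n - 1).choose (n - 1) = (n + d - 1).choose d := by
    rw [show d + n - 1 = n + d - 1 by omega]
    apply Nat.choose_symm_of_eq_add; omega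
  omega

lemma vanish {F : Type} [Field F] [Fintype F] {n m d : ℕ} (hn : 1 ≤ n) (hd : d < m * Fintype.card F)
    (Q : MvPolynomial (Fin n) F) (hQ : Q.IsHomogeneous d) (h : ∀ x, x ≠ 0 → Q ∈ ptI x ^ m) : Q = 0 := by
  classical
  by_contra hne
  have hdeg := hQ.totalDegree hne
  have hm : m ≠ 0 := by rintro rfl; simp at hd
  have h0 : Q ∈ ptI 0 ^ (min m d) := by
    rw [mem_ptI_pow]
    intro j hj
    have : shiftT (0 : Fin n → F) Q = Q := by simp [shiftT]
    rw [this]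
    apply hQ.coeff_eq_zero
    omega
  have hs := schwartz n (min m d) Q hne (by
    intro x
    by_cases hx : x = 0
    · subst hx; exact h0
    · exact Ideal.pow_le_pow_right (min_le_left _ _) (h x hx))
  rw [hdeg] at hs
  have hq : 1 < Fintype.card F := Fintype.one_lt_card
  rcases le_total m d with hmd | hmd
  · rw [min_eq_left hmd] at hs; omega
  · rw [min_eq_right hmd] at hs
    have hd0 : d = 0 := by
      by_contra hd0
      have : d * 1 < d * Fintype.card F := Nat.mul_lt_mul_of_pos_left hq (by omega)
      omega
    subst hd0
    have hx0 : (fun _ => 1 : Fin n → F) ≠ 0 := fun h => one_ne_zero (congrFun h ⟨0, hn⟩)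
    have h1 := Ideal.pow_le_self hm (h _ hx0)
    rw [totalDegree_eq_zero_iff_eq_C.1 hdeg] at h1 hne
    simp [ptI, RingHom.mem_ker] at h1
    rw [h1] at hne; simp at hne

/- `Pr` plays the role of `ℙF_q^{n-1}` (fixed representatives of nonzero vectors up to
nonzero scalar multiples), and `S ⊆ Pr` contains at least a `δ` fraction of directions. -/
theorem stmt17 (F : Type) [Field F] [Fintype F] [DecidableEq F] (n m d : ℕ)
    (hn : 1 ≤ n) (hm : 1 ≤ m) (hd : d < m * Fintype.card F)
    (δ : ℝ) (hδ0 : 0 ≤ δ) (hδ1 : δ ≤ 1)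
    (Pr : Finset (Fin n → F)) (hPr0 : ∀ u ∈ Pr, u ≠ 0)
    (hPr : ∀ u : Fin n → F, u ≠ 0 → ∃! w, w ∈ Pr ∧ ∃ c : Fˣ, u = (c : F) • w)
    (S : Finset (Fin n → F)) (hS : S ⊆ Pr) (hScard : δ * (Pr.card : ℝ) ≤ (S.card : ℝ)) :
    δ * ((d + n - 1).choose (n - 1) : ℝ) ≤ (evalRank F n m d S : ℝ) := by
  classical
  haveI : FiniteDimensional F (homogeneousSubmodule (Fin n) F d) :=
    Module.Finite.iff_fg.2 (homogeneousSubmodule_fg (Fin n) F d)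
  let X : Finset (Fin n → F) := Finset.univ.filter (· ≠ 0)
  let sc : Finset (Fin n → F) → Finset (Fin n → F) := fun A =>
    (A ×ˢ (Finset.univ : Finset Fˣ)).image fun p => (p.2 : F) • p.1
  have hcard : ∀ A ⊆ Pr, (sc A).card = A.card * Fintype.card Fˣ := by
    intro A hA
    rw [Finset.card_image_of_injOn, Finset.card_product, Finset.card_univ]
    rintro ⟨u, a⟩ hu ⟨v, b⟩ hv huv
    simp only [Finset.coe_product, Set.mem_prod, Finset.mem_coe] at hu hv huv
    have hu' := hA hu.1
    have hv' := hA hv.1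
    have hne : (a : F) • u ≠ 0 := smul_ne_zero a.ne_zero (hPr0 u hu')
    have : u = v := (hPr _ hne).unique ⟨hu', a, rfl⟩ ⟨hv', b, huv⟩
    subst this
    have hab : (a : F) = b := smul_left_injective F (hPr0 u hu') huv
    rw [Units.ext hab]
  have hX : ∀ x, x ∈ X ↔ x ≠ 0 := by simp [X]
  have hPX : sc Pr = X := by
    ext x
    rw [hX]
    constructor
    · intro h
      obtain ⟨⟨u, a⟩, hu, rfl⟩ := Finset.mem_image.1 h
      exact smul_ne_zero a.ne_zero (hPr0 u (Finset.mem_product.1 hu).1)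
    · intro h
      obtain ⟨w, ⟨hw, c, hc⟩, -⟩ := hPr x h
      exact Finset.mem_image.2 ⟨(w, c), by simp [hw], hc.symm⟩
  have hSX : sc S ⊆ X := by
    rw [← hPX]
    exact Finset.image_subset_image (Finset.product_subset_product_left hS)
  have hK : X.inf (Kx F n m d) = ⊥ := by
    rw [eq_bot_iff]
    intro Q hQ
    rw [mem_inf_Kx] at hQ
    rw [Submodule.mem_bot]
    exact Subtype.ext (vanish hn hd Q.1 Q.2 fun x hx => hQ x ((hX x).2 hx))
  have hav := averaging (Kx F n m d) hn (sc S) X hX hSX hK (fun g A => Kx_equiv g A)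
  have hKS : S.inf (Kx F n m d) ≤ (sc S).inf (Kx F n m d) := by
    intro Q hQ
    rw [mem_inf_Kx] at hQ ⊢
    intro y hy
    obtain ⟨⟨u, a⟩, hu, rfl⟩ := Finset.mem_image.1 hy
    have h1 := map_ptI_pow u ((a : F) • u) m (aeval fun i => C (a : F)⁻¹ * MvPolynomial.X i) (by
      intro P
      change ((eval ((a : F) • u)).comp (aeval fun i => C (a : F)⁻¹ * MvPolynomial.X i : MvPolynomial (Fin n) F →ₐ[F] MvPolynomial (Fin n) F).toRingHom) P = _
      congr 1
      apply MvPolynomial.ringHom_ext <;> simp) Q.1 (hQ u (Finset.mem_product.1 hu).1)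
    rw [scale_hom _ _ Q.2, smul_eq_C_mul] at h1
    have h2 := Ideal.mul_mem_left _ (C ((a : F) ^ d)) h1
    rw [← mul_assoc, ← map_mul, ← mul_pow, mul_inv_cancel₀ a.ne_zero, one_pow, map_one, one_mul] at h2
    exact h2
  have hfr := Submodule.finrank_mono hKS
  have hev := evalRank_ge (m := m) (d := d) S
  have hge := finrank_ge (F := F) (d := d) hn
  rw [← hPX, hcard S hS, hcard Pr le_rfl] at hav
  have hu : 0 < Fintype.card Fˣ := Fintype.card_pos
  set D := Module.finrank F (homogeneousSubmodule (Fin n) F d)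
  set k' := Module.finrank F ((sc S).inf (Kx F n m d) : Submodule F _)
  have hav2 : S.card * D + Pr.card * k' ≤ Pr.card * D := by
    refine Nat.le_of_mul_le_mul_left ?_ hu
    calc _ = S.card * Fintype.card Fˣ * D + Pr.card * Fintype.card Fˣ * k' := by ring
      _ ≤ _ := hav
      _ = _ := by ring
  have hfin : S.card * D ≤ Pr.card * evalRank F n m d S := by
    have : Pr.card * D ≤ Pr.card * (evalRank F n m d S + k') := Nat.mul_le_mul_left _ (by omega)
    rw [mul_add] at this
    omega
  have hP : 0 < Pr.card := by
    have hx0 : (fun _ => 1 : Fin n → F) ≠ 0 := fun h => one_ne_zero (congrFun h ⟨0, hn⟩)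
    obtain ⟨w, ⟨hw, -⟩, -⟩ := hPr _ hx0
    exact Finset.card_pos.2 ⟨w, hw⟩
  have hPR : (0 : ℝ) < Pr.card := by exact_mod_cast hP
  have hfinR : (S.card : ℝ) * D ≤ Pr.card * evalRank F n m d S := by exact_mod_cast hfin
  have hgeR : ((d + n - 1).choose (n - 1) : ℝ) ≤ D := by exact_mod_cast hge
  refine le_of_mul_le_mul_left ?_ hPR
  calc (Pr.card : ℝ) * (δ * ((d + n - 1).choose (n - 1) : ℝ))
      ≤ Pr.card * (δ * D) := by gcongr
    _ = (δ * Pr.card) * D := by ring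
    _ ≤ S.card * D := by gcongr
    _ ≤ _ := hfinR
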